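/- arXiv:1812.11111 — 4 statements merged into one kernel-verified Lean document; each statement's English description precedes it below -/
import Mathlib

section
/- For every integer n ≥ 1 and every vertex v, the vertex v belongs to S_n (the set of vertices remaining after n pruning steps) if and only if for every layer l, the number of neighbors w of v in layer l such that alive (n−1) l v w holds is at least k l. (Theorem 2 of the paper, restated via the recursive characterization of MNEB membership in Y_{[l],n−1}.) -/
/-- The pruning operator: keep the vertices of `S` that have, in every layer `i`,
at least `k i` neighbors (in layer `i`) inside `S`. -/
def prune {V : Type*} {R : ℕ} (G : Fin R → SimpleGraph V) [∀ i, DecidableRel (G i).Adj]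
    (k : Fin R → ℕ) (S : Set V) : Set V :=
  {v | v ∈ S ∧ ∀ i : Fin R, k i ≤ Nat.card {w : V // (G i).Adj v w ∧ w ∈ S}}

/-- The pruning sequence: `S_0` is the set of all vertices, `S_{n+1} = P (S_n)`. -/
def pruneSeq {V : Type*} {R : ℕ} (G : Fin R → SimpleGraph V) [∀ i, DecidableRel (G i).Adj]
    (k : Fin R → ℕ) : ℕ → Set V
  | 0 => Set.univ
  | n + 1 => prune G k (pruneSeq G k n)

/-- Aliveness of the stub `(e_{[i]}, w)`, where `e_{[i]}` is the layer-`i` edge from `v` to `w`: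
`alive 0 i v w` holds whenever `v, w` are adjacent in layer `i`, and `alive (n+1) i v w` holds
iff `v, w` are adjacent in layer `i` and for every layer `l`, the number of vertices `u`
adjacent to `w` in layer `l` with `(l, u) ≠ (i, v)` such that `alive n l w u` holds is at
least `k l - 1` if `l = i` and at least `k l` otherwise. -/
def alive {V : Type*} {R : ℕ} (G : Fin R → SimpleGraph V) [∀ i, DecidableRel (G i).Adj]
    (k : Fin R → ℕ) : ℕ → Fin R → V → V → Prop
  | 0, i, v, w => (G i).Adj v w
  | n + 1, i, v, w => (G i).Adj v w ∧ ∀ l : Fin R,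
      (if l = i then k l - 1 else k l) ≤
        Nat.card {u : V // (G l).Adj w u ∧ (l, u) ≠ (i, v) ∧ alive G k n l w u}

theorem card_subtype_mono {V : Type*} [Finite V] {p q : V → Prop} (h : ∀ u, p u → q u) :
    Nat.card {u // p u} ≤ Nat.card {u // q u} :=
  Set.ncard_le_ncard (s := {u | p u}) (t := {u | q u}) h

theorem card_subtype_le_card_ne_add_one {V : Type*} [Finite V] (p : V → Prop) (a : V) :
    Nat.card {u // p u} ≤ Nat.card {u // p u ∧ u ≠ a} + 1 := by
  have h := Set.pred_ncard_le_ncard_sdiff_singleton {u | p u} a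
  exact Nat.le_add_of_sub_le h

theorem card_subtype_ne_add_one {V : Type*} [Finite V] {p : V → Prop} {a : V} (ha : p a) :
    Nat.card {u // p u ∧ u ≠ a} + 1 = Nat.card {u // p u} :=
  Set.ncard_sdiff_singleton_add_one (s := {u | p u}) ha

section Pruning

variable {V : Type*} {R : ℕ} {G : Fin R → SimpleGraph V}
  [∀ i, DecidableRel (G i).Adj] {k : Fin R → ℕ}

theorem alive.adj {n : ℕ} {i : Fin R} {v w : V} (h : alive G k n i v w) : (G i).Adj v w := by
  cases n with
  | zero => exact h
  | succ n => exact h.1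

variable [Finite V]

theorem alive_of_alive_succ {n : ℕ} {i : Fin R} {v w : V} (h : alive G k (n + 1) i v w) :
    alive G k n i v w := by
  induction n generalizing i v w with
  | zero => exact h.1
  | succ n ih =>
    exact ⟨h.1, fun l => (h.2 l).trans
      (card_subtype_mono fun u hu => ⟨hu.1, hu.2.1, ih hu.2.2⟩)⟩

/-- A vertex with enough alive neighbors in every layer is alive as seen from any neighbor. -/
theorem alive_succ_of_le_card {n : ℕ} {i : Fin R} {v w : V} (hadj : (G i).Adj v w)
    (h : ∀ l, k l ≤ Nat.card {u : V // (G l).Adj w u ∧ alive G k n l w u}) :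
    alive G k (n + 1) i v w := by
  refine ⟨hadj, fun l => ?_⟩
  split_ifs with hl
  · subst hl
    have hle := (h l).trans (card_subtype_le_card_ne_add_one _ v)
    refine (Nat.sub_le_of_le_add hle).trans (card_subtype_mono fun u hu => ?_)
    exact ⟨hu.1.1, fun heq => hu.2 (Prod.ext_iff.1 heq).2, hu.1.2⟩
  · refine (h l).trans (card_subtype_mono fun u hu => ?_)
    exact ⟨hu.1, fun heq => hl (Prod.ext_iff.1 heq).1, hu.2⟩

/-- If an edge is alive in both directions, its far endpoint has enough alive neighbors in
every layer. -/
theorem le_card_of_alive_succ {n : ℕ} {i : Fin R} {v w : V} (h : alive G k (n + 1) i v w)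
    (hback : alive G k n i w v) (l : Fin R) :
    k l ≤ Nat.card {u : V // (G l).Adj w u ∧ alive G k n l w u} := by
  have hl := h.2 l
  split_ifs at hl with hli
  · subst hli
    rw [← card_subtype_ne_add_one (a := v) ⟨hback.adj, hback⟩]
    refine Nat.le_add_of_sub_le (hl.trans (card_subtype_mono fun u hu => ?_))
    exact ⟨⟨hu.1, hu.2.2⟩, fun heq => hu.2.1 (by rw [heq])⟩
  · exact hl.trans (card_subtype_mono fun u hu => ⟨hu.1, hu.2.2⟩)

theorem mem_pruneSeq_succ_iff {n : ℕ} {v : V} :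
    v ∈ pruneSeq G k (n + 1) ↔
      ∀ l, k l ≤ Nat.card {w : V // (G l).Adj v w ∧ w ∈ pruneSeq G k n} := by
  refine ⟨fun h => h.2, fun h => ⟨?_, h⟩⟩
  induction n with
  | zero => trivial
  | succ n ih =>
    have h' (l) : k l ≤ Nat.card {w : V // (G l).Adj v w ∧ w ∈ pruneSeq G k n} :=
      (h l).trans (card_subtype_mono fun u hu => ⟨hu.1, hu.2.1⟩)
    exact ⟨ih h', h'⟩

theorem mem_pruneSeq_succ_iff_alive {n : ℕ} {v : V} :
    v ∈ pruneSeq G k (n + 1) ↔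
      ∀ l, k l ≤ Nat.card {w : V // (G l).Adj v w ∧ alive G k n l v w} := by
  induction n generalizing v with
  | zero =>
    rw [mem_pruneSeq_succ_iff]
    simp [pruneSeq, alive]
  | succ n ih =>
    rw [mem_pruneSeq_succ_iff]
    simp only [ih]
    refine ⟨fun h l => (h l).trans (card_subtype_mono fun w hw =>
      ⟨hw.1, alive_succ_of_le_card hw.1 hw.2⟩), fun h l => (h l).trans
      (card_subtype_mono fun w hw => ⟨hw.1, le_card_of_alive_succ hw.2 ?_⟩)⟩
    exact alive_of_alive_succ (alive_of_alive_succ (alive_succ_of_le_card hw.1.symm h))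

end Pruning

/-- Theorem 2 of the paper: for `n ≥ 1`, a vertex `v` survives the `n`-th pruning step
iff, in every layer `l`, it has at least `k l` neighbors `w` whose incoming stub is
`(n-1)`-alive. -/
theorem mem_pruneSeq_iff_alive {V : Type*} [Fintype V] {R : ℕ}
    (G : Fin R → SimpleGraph V) [∀ i, DecidableRel (G i).Adj] (k : Fin R → ℕ)
    (n : ℕ) (hn : 1 ≤ n) (v : V) :
    v ∈ pruneSeq G k n ↔
      ∀ l : Fin R, k l ≤ Nat.card {w : V // (G l).Adj v w ∧ alive G k (n - 1) l v w} := by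
  obtain ⟨m, rfl⟩ := Nat.exists_eq_add_of_le' hn
  exact mem_pruneSeq_succ_iff_alive
end

section
/- (Necessity half of Theorem 2.) For every integer n ≥ 1 and every vertex v, if v ∈ S_n then for every layer l the number of neighbors w of v in layer l such that alive (n−1) l v w holds is at least k l. -/
/-- A layer-`i` edge towards a vertex surviving `n` prunings is alive at depth `n`. -/
theorem alive_of_adj_of_mem_pruneSeq {V : Type*} [Finite V] {R : ℕ}
    (G : Fin R → SimpleGraph V) [∀ i, DecidableRel (G i).Adj] (k : Fin R → ℕ)
    {n : ℕ} {i : Fin R} {v w : V} (hvw : (G i).Adj v w) (hw : w ∈ pruneSeq G k n) :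
    alive G k n i v w := by
  induction n generalizing i v w with
  | zero => exact hvw
  | succ n ih =>
    refine ⟨hvw, fun l => ?_⟩
    have hk : k l ≤ {u | (G l).Adj w u ∧ u ∈ pruneSeq G k n}.ncard := hw.2 l
    change _ ≤ {u | (G l).Adj w u ∧ (l, u) ≠ (i, v) ∧ alive G k n l w u}.ncard
    split_ifs with hl
    · calc k l - 1 ≤ {u | (G l).Adj w u ∧ u ∈ pruneSeq G k n}.ncard - 1 := by gcongr
        _ ≤ ({u | (G l).Adj w u ∧ u ∈ pruneSeq G k n} \ {v}).ncard :=
          Set.pred_ncard_le_ncard_sdiff_singleton _ _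
        _ ≤ {u | (G l).Adj w u ∧ (l, u) ≠ (i, v) ∧ alive G k n l w u}.ncard :=
          Set.ncard_le_ncard fun u hu =>
            ⟨hu.1.1, fun h => hu.2 (Prod.ext_iff.1 h).2, ih hu.1.1 hu.1.2⟩
    · exact hk.trans <| Set.ncard_le_ncard fun u hu =>
        ⟨hu.1, fun h => hl (Prod.ext_iff.1 h).1, ih hu.1 hu.2⟩

/-- Necessity half of Theorem 2: for `n ≥ 1`, if `v` survives the `n`-th pruning, then in
every layer `l` the vertex `v` has at least `k l` neighbors `w` with `alive (n-1) l v w`. -/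
theorem alive_of_mem_pruneSeq {V : Type*} [Fintype V] {R : ℕ}
    (G : Fin R → SimpleGraph V) [∀ i, DecidableRel (G i).Adj] (k : Fin R → ℕ)
    (n : ℕ) (hn : 1 ≤ n) (v : V) (hv : v ∈ pruneSeq G k n) :
    ∀ l : Fin R, k l ≤ Nat.card {w : V // (G l).Adj v w ∧ alive G k (n - 1) l v w} := by
  obtain ⟨m, rfl⟩ := Nat.exists_eq_add_of_le' hn
  intro l
  have hk : k l ≤ {w | (G l).Adj v w ∧ w ∈ pruneSeq G k m}.ncard := hv.2 l
  exact hk.trans <| Set.ncard_le_ncard (t := {w | (G l).Adj v w ∧ alive G k m l v w})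
    fun w hw => ⟨hw.1, alive_of_adj_of_mem_pruneSeq G k hw.1 hw.2⟩
end

section
/- For every n ≥ 0 and every vertex w with w ∈ S_n, every incoming stub of w is n-alive: for every layer l and every vertex v adjacent to w in layer l, alive n l v w holds. -/
/-- If `w` survives `n` pruning steps, then every incoming stub of `w` is `n`-alive:
for every layer `l` and every `v` adjacent to `w` in layer `l`, `alive n l v w` holds. -/
theorem alive_of_mem_pruneSeq' {V : Type*} [Fintype V] {R : ℕ}
    (G : Fin R → SimpleGraph V) [∀ i, DecidableRel (G i).Adj] (k : Fin R → ℕ)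
    (n : ℕ) (w : V) (hw : w ∈ pruneSeq G k n) :
    ∀ (l : Fin R) (v : V), (G l).Adj v w → alive G k n l v w := by
  induction n generalizing w with
  | zero => exact fun _ _ h => h
  | succ n ih =>
    intro i v hvw
    refine ⟨hvw, fun l => ?_⟩
    have hcard : k l ≤ {u | (G l).Adj w u ∧ u ∈ pruneSeq G k n}.ncard := hw.2 l
    change _ ≤ {u | (G l).Adj w u ∧ (l, u) ≠ (i, v) ∧ alive G k n l w u}.ncard
    split_ifs with hl
    · calc k l - 1 ≤ {u | (G l).Adj w u ∧ u ∈ pruneSeq G k n}.ncard - 1 :=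
            Nat.sub_le_sub_right hcard 1
        _ ≤ ({u | (G l).Adj w u ∧ u ∈ pruneSeq G k n} \ {v}).ncard :=
            Set.pred_ncard_le_ncard_sdiff_singleton _ _
        _ ≤ {u | (G l).Adj w u ∧ (l, u) ≠ (i, v) ∧ alive G k n l w u}.ncard :=
          Set.ncard_le_ncard fun u hu =>
            ⟨hu.1.1, fun h => hu.2 (Prod.ext_iff.1 h).2, ih u hu.1.2 l w hu.1.1⟩
    · exact hcard.trans <| Set.ncard_le_ncard fun u hu =>
        ⟨hu.1, fun h => hl (Prod.ext_iff.1 h).1, ih u hu.2 l w hu.1⟩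
end

section
/- (Consistency of the correlated recursion with the uncorrelated one.) Under the stated hypotheses, for every n ≥ 0, every layer h, and every index vector i with q^{[h]}_i ≠ 0, one has Y n h i = y n h. In particular, when the edge joint distribution factorizes as e^{[h]}_{i,j} = q^{[h]}_i · q^{[h]}_j (no degree–degree correlations), the solution of the correlated k-core recursion is independent of the conditioning index i and coincides with the solution of the uncorrelated recursion. -/
/-- The threshold vector `k_h`: its `l`-th component is `k l` for `l ≠ h` and `k h - 1`
for `l = h`. -/
def kvec {R : ℕ} (k : Fin R → ℕ) (h : Fin R) : Fin R → ℕ :=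
  fun l => if l = h then k h - 1 else k l

/-- The shifted vector `j_l^{[h]}`: it equals `j` if `l = h`, and otherwise is obtained from
`j` by decreasing its `l`-th component by `1` and increasing its `h`-th component by `1`. -/
def shiftVec {R : ℕ} (j : Fin R → ℕ) (l h : Fin R) : Fin R → ℕ :=
  if l = h then j
  else fun m => if m = l then j l - 1 else if m = h then j h + 1 else j m

/-- Consistency of the correlated k-core recursion with the uncorrelated one: when the edge
joint distribution factorizes as `e^{[h]}_{i,j} = q^{[h]}_i * q^{[h]}_j`, the solution `Y` of
the correlated recursion is independent of the conditioning index `i` (wherever `q^{[h]}_i ≠ 0`)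
and coincides with the solution `y` of the uncorrelated recursion. -/
theorem correlated_recursion_eq_uncorrelated
    {R : ℕ} (hR : 1 ≤ R) (k : Fin R → ℕ)
    (q : Fin R → (Fin R → ℕ) → ℝ)
    (hq0 : ∀ h i, 0 ≤ q h i)
    (hqsum : ∀ h, Summable (q h))
    (hq1 : ∀ h, ∑' i : Fin R → ℕ, q h i = 1)
    (y : ℕ → Fin R → ℝ) (Y : ℕ → Fin R → (Fin R → ℕ) → ℝ)
    (hy0 : ∀ h, y 0 h = 1)
    (hy : ∀ n h, y (n + 1) h =
      ∑' j : Fin R → ℕ, if ∀ l : Fin R, kvec k h l ≤ j l then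
        q h j * ∑ m ∈ Finset.Icc (kvec k h) j, ∏ l : Fin R,
          ((j l).choose (m l) : ℝ) * (y n l) ^ (m l) * (1 - y n l) ^ (j l - m l)
      else 0)
    (hY0 : ∀ h i, Y 0 h i = 1)
    (hYnull : ∀ n h i, q h i = 0 → Y n h i = 1)
    (hY : ∀ n h i, q h i ≠ 0 → q h i * Y (n + 1) h i =
      ∑' j : Fin R → ℕ, if ∀ l : Fin R, kvec k h l ≤ j l then
        (q h i * q h j) * ∑ m ∈ Finset.Icc (kvec k h) j, ∏ l : Fin R,
          ((j l).choose (m l) : ℝ) * (Y n l (shiftVec j l h)) ^ (m l) *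
            (1 - Y n l (shiftVec j l h)) ^ (j l - m l)
      else 0)
    (hsumy : ∀ n h, Summable (fun j : Fin R → ℕ => if ∀ l : Fin R, kvec k h l ≤ j l then
        q h j * ∑ m ∈ Finset.Icc (kvec k h) j, ∏ l : Fin R,
          ((j l).choose (m l) : ℝ) * (y n l) ^ (m l) * (1 - y n l) ^ (j l - m l)
      else 0))
    (hsumY : ∀ n h (i : Fin R → ℕ), Summable (fun j : Fin R → ℕ => if ∀ l : Fin R, kvec k h l ≤ j l then
        (q h i * q h j) * ∑ m ∈ Finset.Icc (kvec k h) j, ∏ l : Fin R,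
          ((j l).choose (m l) : ℝ) * (Y n l (shiftVec j l h)) ^ (m l) *
            (1 - Y n l (shiftVec j l h)) ^ (j l - m l)
      else 0))
    (hcompat : ∀ h j, q h j ≠ 0 → ∀ l, l ≠ h → 1 ≤ j l → q l (shiftVec j l h) ≠ 0) :
    ∀ (n : ℕ) (h : Fin R) (i : Fin R → ℕ), q h i ≠ 0 → Y n h i = y n h := by
  intro n
  induction n with
  | zero => intro h i _; rw [hY0, hy0]
  | succ n ih =>
    intro h i hi
    apply mul_left_cancel₀ hi
    rw [hY n h i hi, hy, ← tsum_mul_left]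
    refine tsum_congr fun j => ?_
    split_ifs
    · by_cases hj : q h j = 0
      · simp [hj]
      rw [mul_assoc]
      congr 2
      refine Finset.sum_congr rfl fun m hm => Finset.prod_congr rfl fun l _ => ?_
      have hml : m l ≤ j l := (Finset.mem_Icc.mp hm).2 l
      rcases Nat.eq_zero_or_pos (j l) with hjl | hjl
      · have hm0 : m l = 0 := by omega
        simp [hjl, hm0]
      · have hql : q l (shiftVec j l h) ≠ 0 := by
          by_cases hlh : l = h
          · subst hlh
            simpa [shiftVec] using hj
          · exact hcompat h j hj l hlh hjl
        rw [ih l _ hql]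
    · simp
end
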